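/- Let T=(V,w) be an n-weighted tournament with m>2 alternatives, let a∈SC(T) be a Split Cycle winner and d∈V∖SC(T) a non-winner. Then −⌈n/2⌉·(m−1) ≤ MoV_SC(d,T) and MoV_SC(a,T) ≤ n + ⌈(m−2)/2⌉. Moreover both bounds are tight: for every even m>2 there is an n-weighted tournament with a Split Cycle winner a satisfying MoV_SC(a,T) = n + ⌈(m−2)/2⌉, and for every even n and every m>2 there is an n-weighted tournament with a non-winner d satisfying MoV_SC(d,T) = −⌈n/2⌉·(m−1). -/

import Mathlib

/-!
Only two facts about surviving edges are used. If `(y, x)` has positive margin `k` and no edge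
into `y` has margin at least `k`, then `(y, x)` survives, since a closed walk through `(y, x)` also
enters `y` (`edgeMD_of_forall_lt`). If there is a two-step path `x → z → y` with margins at least
`k`, then `(y, x)` is deleted because of the cycle `y, x, z, y` (`not_edgeMD_of_triangle`).

*Upper bounds on costs.* Both optimal changes only touch the edges at one vertex (`star`).
A non-winner `d` wins as soon as it has weight at least `⌈n/2⌉` against everybody. For a winner `a`,
averaging over `V \ {a}` yields `y ≠ a` with at most `(m - 2) / 2` alternatives `z ≠ a` satisfying
`w z y = n`. Giving `y` full weight against `a` and one extra unit against each such `z` makes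
`(y, a)` an edge of margin `n` while no edge of margin `n` enters `y`.

*Tightness for winners.* Let `a` beat everybody by `n`, and let the remaining `2t + 1` alternatives
form a regular tournament with margins `n`. If `(y, a)` survives with margin `k` after a reversal,
then at least `(n + k) / 2` was spent on `(y, a)`, and each of the `t ≥ 1` two-step paths
`a → z → y` was broken at cost at least `(n - k) / 2 + 1`; the sum is at least `n + t`.

*Tightness for non-winners.* Let everybody beat `d` by `n = 2h`, all other pairs being tied. If `d`
wins after a reversal, then for every `y ≠ d` a total of at least `h` was spent on edges into `y`:
if `(y, d)` still has margin `k > 0`, then `h - k / 2` was spent on `(d, y)`, and some edge `(p, y)`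
got margin at least `k`, at cost `k / 2`.
-/

/-- An `n`-weighted tournament on vertex set `V`. -/
structure WTournament (V : Type) (n : ℕ) where
  w : V → V → ℤ
  diag : ∀ x, w x x = 0
  nonneg : ∀ x y, x ≠ y → 0 ≤ w x y
  compl : ∀ x y, x ≠ y → w x y + w y x = (n : ℤ)

namespace WTournament

variable {V : Type} {n : ℕ}

/-- The (majority) margin of `x` over `y`. -/
def margin (T : WTournament V n) (x y : V) : ℤ :=
  T.w x y - T.w y x

/-- The Borda score of `x`. -/
def sBO [Fintype V] (T : WTournament V n) (x : V) : ℤ :=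
  ∑ z, T.w x z

/-- The set of Borda winners. -/
def BO [Fintype V] (T : WTournament V n) : Set V :=
  {x | ∀ y, T.sBO y ≤ T.sBO x}

/-- The weighted outdegree of `x`. -/
def wdeg [Fintype V] (T : WTournament V n) (x : V) : ℤ :=
  ∑ z, T.w x z

/-- `x` w-covers `y`. -/
def WCovers (T : WTournament V n) (x y : V) : Prop :=
  0 < T.margin x y ∧ ∀ z, z ≠ x → z ≠ y → T.w y z ≤ T.w x z

/-- The weighted uncovered set. -/
def wUC (T : WTournament V n) : Set V :=
  {x | ∀ y, ¬ T.WCovers y x}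

/-- The consecutive edges of a vertex sequence. -/
def seqEdges (l : List V) : List (V × V) :=
  l.zip l.tail

/-- A dominance cycle. -/
def IsDominanceCycle (T : WTournament V n) (l : List V) : Prop :=
  2 ≤ l.length ∧ l.head? = l.getLast? ∧ ∀ e ∈ seqEdges l, 0 < T.margin e.1 e.2

/-- The splitting number of a cycle. -/
def splitNum (T : WTournament V n) (l : List V) : ℤ :=
  ((seqEdges l).map fun e => T.margin e.1 e.2).foldr min (n : ℤ)

/-- `e` is a splitting edge of the cycle `l`. -/
def IsSplittingEdge (T : WTournament V n) (l : List V) (e : V × V) : Prop :=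
  e ∈ seqEdges l ∧ T.margin e.1 e.2 = T.splitNum l

/-- `(x, y)` is an edge of the margin graph surviving the deletion of every splitting
edge of every dominance cycle (i.e. an edge of `M_D`). -/
def EdgeMD (T : WTournament V n) (x y : V) : Prop :=
  0 < T.margin x y ∧
    ¬ ∃ l : List V, T.IsDominanceCycle l ∧ T.IsSplittingEdge l (x, y)

/-- The set of Split Cycle winners. -/
def SC (T : WTournament V n) : Set V :=
  {x | ∀ y, ¬ T.EdgeMD y x}

/-- A reversal function for the tournament `T`. -/
structure Reversal (T : WTournament V n) where
  r : V → V → ℤ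
  antisymm : ∀ x y, r x y = - r y x
  lo : ∀ x y, x ≠ y → 0 ≤ T.w x y + r x y
  hi : ∀ x y, x ≠ y → T.w x y + r x y ≤ (n : ℤ)

/-- The size of a reversal function. -/
def Reversal.size [Fintype V] {T : WTournament V n} (R : Reversal T) : ℤ :=
  ∑ x : V, ∑ y : V, max (R.r x y) 0

/-- The tournament obtained from `T` by the reversal `R`. -/
def apply (T : WTournament V n) (R : Reversal T) : WTournament V n :=
  { w := fun x y => T.w x y + R.r x y
    diag := fun x => by
      have h := R.antisymm x x
      have h1 := T.diag x
      show T.w x x + R.r x x = 0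
      linarith
    nonneg := fun x y h => R.lo x y h
    compl := fun x y h => by
      have h1 := R.antisymm x y
      have h2 := T.compl x y h
      show (T.w x y + R.r x y) + (T.w y x + R.r y x) = (n : ℤ)
      linarith }

/-- `R` witnesses the margin of victory of `a`: it is a destructive reversal set if
`a` is a winner and a constructive reversal set if `a` is a non-winner. -/
def IsMoVWitness (S : WTournament V n → Set V) (T : WTournament V n) (a : V)
    (R : Reversal T) : Prop :=
  a ∈ S T ↔ a ∉ S (T.apply R)

open Classical in
/-- The margin of victory of `a` in `T` with respect to the tournament solution `S`:
the minimum size of a destructive reversal set for winners, and minus the minimum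
size of a constructive reversal set for non-winners. -/
noncomputable def MoV [Fintype V] (S : WTournament V n → Set V)
    (T : WTournament V n) (a : V) : ℤ :=
  if a ∈ S T then
    sInf {k : ℤ | ∃ R : Reversal T, IsMoVWitness S T a R ∧ R.size = k}
  else
    - sInf {k : ℤ | ∃ R : Reversal T, IsMoVWitness S T a R ∧ R.size = k}

/-- The reversal values with `R (a, b) = 1`, `R (b, a) = -1` and `0` elsewhere. -/
def singleFun [DecidableEq V] (a b : V) : V → V → ℤ := fun p q =>
  if p = a ∧ q = b then 1 else if p = b ∧ q = a then -1 else 0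

/-- The reversal values with `Q (b, c) = -1`, `Q (c, b) = 1`, `Q (a, c) = 1`,
`Q (c, a) = -1` and `0` elsewhere. -/
def transferFun [DecidableEq V] (a b c : V) : V → V → ℤ := fun p q =>
  if p = b ∧ q = c then -1
  else if p = c ∧ q = b then 1
  else if p = a ∧ q = c then 1
  else if p = c ∧ q = a then -1
  else 0

/-- A monotonic tournament solution. -/
def IsMonotonic [DecidableEq V] (S : WTournament V n → Set V) : Prop :=
  ∀ (T : WTournament V n) (a b : V) (R : Reversal T),
    a ≠ b → a ∈ S T → T.w a b < (n : ℤ) → R.r = singleFun a b →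
    a ∈ S (T.apply R)

/-- A transfer-monotonic tournament solution. -/
def IsTransferMonotonic [DecidableEq V] (S : WTournament V n → Set V) : Prop :=
  ∀ (T : WTournament V n) (a b c : V) (Q : Reversal T),
    a ≠ b → a ≠ c → b ≠ c → a ∈ S T → 0 < T.w b c → T.w a c < (n : ℤ) →
    Q.r = transferFun a b c → a ∈ S (T.apply Q)

end WTournament

namespace WTournament

variable {V : Type} {n : ℕ}

/-! ### Surviving edges -/

/-- In a closed walk, the start of every edge is also the end of an edge. -/
lemma exists_pred {l : List V} {y x : V} (hl : 2 ≤ l.length) (hc : l.head? = l.getLast?)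
    (h : (y, x) ∈ seqEdges l) : ∃ p, (p, y) ∈ seqEdges l := by
  have key : ∀ i (hi : i + 1 < l.length), (l[i], l[i + 1]) ∈ seqEdges l := by
    intro i hi
    rw [seqEdges, List.mem_iff_getElem]
    refine ⟨i, by simp; omega, by simp⟩
  rw [seqEdges, List.mem_iff_getElem] at h
  obtain ⟨i, hi, he⟩ := h
  simp only [List.length_zip, List.length_tail, lt_inf_iff] at hi
  simp only [List.getElem_zip, List.getElem_tail, Prod.mk.injEq] at he
  rcases i with _ | i
  · have h0 : l[0] = l[l.length - 1] := by
      rw [List.head?_eq_getElem?, List.getLast?_eq_getElem?, List.getElem?_eq_getElem (by omega),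
        List.getElem?_eq_getElem (by omega)] at hc
      simpa using hc
    refine ⟨l[l.length - 2], ?_⟩
    have := key (l.length - 2) (by omega)
    have e : l.length - 2 + 1 = l.length - 1 := by omega
    simp only [e] at this
    rw [← he.1, h0]
    exact this
  · exact ⟨l[i], by rw [← he.1]; exact key i (by omega)⟩

lemma splitNum_le (T : WTournament V n) (l : List V) {e : V × V} (he : e ∈ seqEdges l) :
    T.splitNum l ≤ T.margin e.1 e.2 := by
  unfold splitNum
  generalize seqEdges l = s at he
  induction s with
  | nil => simp at he
  | cons b t ih =>
    rcases List.mem_cons.1 he with rfl | h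
    · simp
    · simpa using Or.inr (ih h)

/-- An edge `(y, x)` survives when no edge into `y` is at least as strong. -/
lemma edgeMD_of_forall_lt (T : WTournament V n) {y x : V} (h0 : 0 < T.margin y x)
    (h : ∀ p, T.margin p y < T.margin y x) : T.EdgeMD y x := by
  refine ⟨h0, ?_⟩
  rintro ⟨l, ⟨h2, hc, -⟩, hm, hs⟩
  obtain ⟨p, hp⟩ := exists_pred h2 hc hm
  have h1 := T.splitNum_le l hp
  have h3 := h p
  simp only at h1 hs
  omega

lemma margin_self (T : WTournament V n) (x : V) : T.margin x x = 0 := by simp [margin]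

lemma margin_le (T : WTournament V n) (x y : V) : T.margin x y ≤ n := by
  by_cases h : x = y
  · subst h; simp [margin_self]
  · have := T.compl x y h
    have := T.nonneg y x (Ne.symm h)
    unfold margin
    omega

/-- An edge `(y, x)` is deleted when some path `x → z → y` is at least as strong. -/
lemma not_edgeMD_of_triangle (T : WTournament V n) {y x z : V}
    (h1 : T.margin y x ≤ T.margin x z) (h2 : T.margin y x ≤ T.margin z y) :
    ¬ T.EdgeMD y x := by
  rintro ⟨h0, h⟩
  refine h ⟨[y, x, z, y], ⟨by simp, by simp, ?_⟩, by simp [seqEdges], ?_⟩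
  · simp only [seqEdges, List.tail_cons, List.zip_cons_cons, List.mem_cons]
    rintro e (rfl | rfl | rfl | h)
    · exact h0
    · exact h0.trans_le h1
    · exact h0.trans_le h2
    · simp at h
  · have := T.margin_le y x
    simp [splitNum, seqEdges, h1, h2, this]

lemma mem_SC_of_margin_nonpos (T : WTournament V n) {x : V} (h : ∀ y, T.margin y x ≤ 0) :
    x ∈ T.SC :=
  fun y hy => absurd hy.1 (not_lt.2 (h y))

/-! ### Sizes of reversals and the margin of victory -/

lemma size_nonneg [Fintype V] {T : WTournament V n} (R : Reversal T) : 0 ≤ R.size :=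
  Finset.sum_nonneg fun _ _ => Finset.sum_nonneg fun _ _ => le_max_right _ _

lemma bddBelow_sizes [Fintype V] (S : WTournament V n → Set V) (T : WTournament V n) (a : V) :
    BddBelow {k : ℤ | ∃ R : Reversal T, IsMoVWitness S T a R ∧ R.size = k} :=
  ⟨0, by rintro k ⟨R, -, rfl⟩; exact size_nonneg R⟩

lemma margin_apply (T : WTournament V n) (R : Reversal T) (x y : V) :
    (T.apply R).margin x y = T.margin x y + 2 * R.r x y := by
  have := R.antisymm x y
  simp only [margin, apply]
  omega

/-- The reversal which moves `g z` units of weight from `w z c` to `w c z` for every `z ≠ c`. -/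
def star [DecidableEq V] (T : WTournament V n) (c : V) (g : V → ℤ)
    (hg : ∀ z, 0 ≤ g z) (hle : ∀ z, z ≠ c → g z ≤ T.w z c) : Reversal T where
  r x y := (if x = c then g y else 0) - (if y = c then g x else 0)
  antisymm x y := by ring
  lo x y hxy := by
    have h1 := T.nonneg x y hxy
    have h2 := hg y
    split_ifs with hx hy hy
    · exact absurd (hx.trans hy.symm) hxy
    · omega
    · subst hy; have := hle x hxy; omega
    · omega
  hi x y hxy := by
    have h1 := T.compl x y hxy
    have h3 := T.nonneg y x hxy.symm
    have h2 := hg x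
    split_ifs with hx hy hy
    · exact absurd (hx.trans hy.symm) hxy
    · subst hx; have := hle y hxy.symm; omega
    · omega
    · omega

lemma star_size [Fintype V] [DecidableEq V] (T : WTournament V n) (c : V) (g : V → ℤ)
    (hg : ∀ z, 0 ≤ g z) (hle : ∀ z, z ≠ c → g z ≤ T.w z c) (hc : g c = 0) :
    (T.star c g hg hle).size = ∑ z, g z := by
  have h : ∀ x y, max ((T.star c g hg hle).r x y) 0 = if x = c then g y else 0 := by
    intro x y
    have h1 := hg x
    have h2 := hg y
    simp only [star]
    split_ifs with hx hy hy
    · subst hx; subst hy; simp [hc]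
    · simpa using h2
    · simpa using h1
    · simp
  unfold Reversal.size
  simp_rw [h]
  rw [Finset.sum_eq_single c]
  · simp
  · intro b _ hb; simp [hb]
  · simp

/-! ### The bounds -/

/-- Averaging: besides `a` there is a `y` receiving weight `n` from at most half of the
alternatives other than `a` and `y`. -/
lemma exists_small_indegree [Fintype V] [DecidableEq V] (hn : 0 < n) (T : WTournament V n) (a : V)
    (hV : 2 < Fintype.card V) :
    ∃ y, y ≠ a ∧
      2 * ∑ z ∈ Finset.univ.erase a, (if z ≠ y ∧ T.w z y = n then (1 : ℤ) else 0)
        ≤ (Fintype.card V : ℤ) - 2 := by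
  set S : Finset V := Finset.univ.erase a with hS
  have hcard : (S.card : ℤ) = (Fintype.card V : ℤ) - 1 := by
    rw [hS, Finset.card_erase_of_mem (Finset.mem_univ a), Finset.card_univ]
    omega
  have hne : S.Nonempty := by
    rw [← Finset.card_pos]; omega
  have hsum : ∑ y ∈ S, 2 * ∑ z ∈ S, (if z ≠ y ∧ T.w z y = n then (1 : ℤ) else 0)
      ≤ ∑ y ∈ S, ((Fintype.card V : ℤ) - 2) := by
    -- Count every ordered pair together with its reverse.
    have e : ∑ y ∈ S, 2 * ∑ z ∈ S, (if z ≠ y ∧ T.w z y = n then (1 : ℤ) else 0)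
        = ∑ y ∈ S, ∑ z ∈ S, ((if z ≠ y ∧ T.w z y = n then (1 : ℤ) else 0)
            + (if y ≠ z ∧ T.w y z = n then (1 : ℤ) else 0)) := by
      simp_rw [Finset.sum_add_distrib]
      rw [Finset.sum_comm (f := fun y z => if y ≠ z ∧ T.w y z = n then (1 : ℤ) else 0),
        ← Finset.mul_sum]
      ring
    rw [e]
    refine Finset.sum_le_sum fun y hy => ?_
    have e2 : ∑ z ∈ S, (if z = y then (0 : ℤ) else 1) = (Fintype.card V : ℤ) - 2 := by
      rw [← Finset.add_sum_erase S _ hy, if_pos rfl,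
        Finset.sum_congr rfl (fun z hz => if_neg (Finset.ne_of_mem_erase hz)),
        Finset.sum_const, Finset.card_erase_of_mem hy, nsmul_eq_mul, mul_one]
      omega
    rw [← e2]
    refine Finset.sum_le_sum fun z _ => ?_
    by_cases hzy : z = y
    · simp [hzy]
    · have := T.compl z y hzy
      simp only [hzy, Ne.symm hzy, ne_eq, not_false_eq_true, true_and, if_false]
      split_ifs <;> omega
  obtain ⟨y, hy, h⟩ := Finset.exists_le_of_sum_le hne hsum
  exact ⟨y, Finset.ne_of_mem_erase hy, h⟩

lemma MoV_winner_le [Fintype V] (hn : 0 < n) (T : WTournament V n) (a : V)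
    (hV : 2 < Fintype.card V) (ha : a ∈ T.SC) :
    (∃ R : Reversal T, IsMoVWitness SC T a R) ∧
      MoV SC T a ≤ (n : ℤ) + ⌈((Fintype.card V : ℚ) - 2) / 2⌉ := by
  classical
  obtain ⟨y, hya, hy⟩ := T.exists_small_indegree hn a hV
  let g : V → ℤ := fun z => if z = a then T.w a y else
    if z ≠ y ∧ T.w z y = n then 1 else 0
  have hg : ∀ z, 0 ≤ g z := by
    intro z
    have := T.nonneg a y hya.symm
    simp only [g]; split_ifs <;> omega
  have hle : ∀ z, z ≠ y → g z ≤ T.w z y := by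
    intro z hz
    have := T.nonneg z y hz
    simp only [g]
    split_ifs with h1 h2
    · rw [h1]
    · omega
    · omega
  have hgy : g y = 0 := by simp [g, hya]
  have hw : IsMoVWitness SC T a (T.star y g hg hle) := by
    refine iff_of_true ha fun hmem => hmem y ?_
    have hmy : (T.apply (T.star y g hg hle)).margin y a = n := by
      have := T.compl a y hya.symm
      rw [margin_apply]
      simp only [star, g, margin, if_true, hya.symm, if_false]
      omega
    refine edgeMD_of_forall_lt _ (by omega) fun p => ?_
    rw [hmy]
    by_cases hp : p = y
    · subst hp; rw [margin_self]; omega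
    · have h1 := T.compl p y hp
      have h2 := T.nonneg p y hp
      have h3 := T.nonneg y p (Ne.symm hp)
      rw [margin_apply]
      simp only [star, g, margin, if_true, hp, if_false, ne_eq, not_false_eq_true, true_and]
      split_ifs with h4 h5
      · subst h4; omega
      · omega
      · omega
  refine ⟨⟨_, hw⟩, ?_⟩
  rw [MoV, if_pos ha]
  refine (csInf_le (bddBelow_sizes SC T a) ⟨_, hw, rfl⟩).trans ?_
  rw [star_size _ _ _ _ _ hgy, ← Finset.add_sum_erase _ _ (Finset.mem_univ a)]
  have h1 : g a ≤ n := by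
    have := T.compl a y hya.symm
    have := T.nonneg y a hya
    simp only [g, if_true]; omega
  have h2 : ∑ z ∈ Finset.univ.erase a, g z =
      ∑ z ∈ Finset.univ.erase a, (if z ≠ y ∧ T.w z y = n then (1 : ℤ) else 0) :=
    Finset.sum_congr rfl fun z hz => if_neg (Finset.ne_of_mem_erase hz)
  rw [← h2] at hy
  refine add_le_add h1 ?_
  have h3 : ((∑ z ∈ Finset.univ.erase a, g z : ℤ) : ℚ) ≤ ((Fintype.card V : ℚ) - 2) / 2 := by
    have : ((2 * ∑ z ∈ Finset.univ.erase a, g z : ℤ) : ℚ)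
        ≤ (((Fintype.card V : ℤ) - 2 : ℤ) : ℚ) := Int.cast_le.2 hy
    rw [Int.cast_mul, Int.cast_sub, Int.cast_natCast] at this
    norm_num at this ⊢
    linarith
  exact_mod_cast h3.trans (Int.le_ceil _)

lemma le_MoV_nonwinner [Fintype V] (T : WTournament V n) (d : V) (hd : d ∉ T.SC) :
    (∃ R : Reversal T, IsMoVWitness SC T d R) ∧
      -(⌈(n : ℚ) / 2⌉ * ((Fintype.card V : ℤ) - 1)) ≤ MoV SC T d := by
  classical
  obtain ⟨c, hc⟩ : ∃ c : ℤ, c = ⌈(n : ℚ) / 2⌉ := ⟨_, rfl⟩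
  have hn0 : (0 : ℚ) ≤ n := Nat.cast_nonneg n
  have hc1 : (n : ℤ) ≤ 2 * c := by
    have h : (n : ℚ) / 2 ≤ (c : ℚ) := hc ▸ Int.le_ceil _
    have h' : (n : ℚ) ≤ 2 * c := by linarith
    exact_mod_cast h'
  have hc2 : c ≤ n := by
    rw [hc, Int.ceil_le, Int.cast_natCast]
    linarith
  rw [← hc]
  let g : V → ℤ := fun z => if z = d then 0 else max 0 (c - T.w d z)
  have hg : ∀ z, 0 ≤ g z := by
    intro z; simp only [g]; split_ifs <;> simp
  have hle : ∀ z, z ≠ d → g z ≤ T.w z d := by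
    intro z hz
    have := T.compl z d hz
    have := T.nonneg z d hz
    simp only [g, hz, if_false]; omega
  have hgd : g d = 0 := by simp [g]
  have hw : IsMoVWitness SC T d (T.star d g hg hle) := by
    refine iff_of_false hd (not_not.2 (mem_SC_of_margin_nonpos _ fun y => ?_))
    by_cases hy : y = d
    · rw [hy, margin_self]
    · have := T.compl y d hy
      rw [margin_apply]
      simp only [star, g, margin, hy, if_true, if_false]
      omega
  refine ⟨⟨_, hw⟩, ?_⟩
  rw [MoV, if_neg hd]
  refine neg_le_neg ((csInf_le (bddBelow_sizes SC T d) ⟨_, hw, rfl⟩).trans ?_)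
  rw [star_size _ _ _ _ _ hgd, ← Finset.add_sum_erase _ _ (Finset.mem_univ d), hgd, zero_add]
  refine (Finset.sum_le_card_nsmul _ _ c fun z hz => ?_).trans_eq ?_
  · have hz := Finset.ne_of_mem_erase hz
    have := T.nonneg d z (Ne.symm hz)
    simp only [g, hz, if_false]; omega
  · have : 0 < Fintype.card V := Fintype.card_pos_iff.2 ⟨d⟩
    rw [Finset.card_erase_of_mem (Finset.mem_univ d), Finset.card_univ, nsmul_eq_mul,
      Nat.cast_sub this, Nat.cast_one, mul_comm]

/-! ### Tightness for winners -/

/-- `x` beats `y` in the tournament on `{0, …, 2t + 1}` in which `0` beats everybody and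
`1, …, 2t + 1`, arranged in a circle, each beat the next `t`. -/
def Beats (t x y : ℕ) : Prop :=
  (x = 0 ∧ y ≠ 0) ∨ (0 < x ∧ x < y ∧ y ≤ x + t) ∨ (0 < y ∧ y + t < x)

instance (t x y : ℕ) : Decidable (Beats t x y) := by unfold Beats; infer_instance

/-- The tournament of `Beats t`, every edge having weight `n`. -/
def circ (n m t : ℕ) : WTournament (Fin m) n where
  w x y := if Beats t x y then n else 0
  diag x := by simp [Beats]
  nonneg x y _ := by split_ifs <;> simp
  compl x y h := by
    have h' : (x : ℕ) ≠ y := fun e => h (Fin.ext e)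
    have : Beats t x y ↔ ¬ Beats t y x := by unfold Beats; omega
    by_cases hb : Beats t y x <;> simp [this, hb]

lemma circ_margin {n m t : ℕ} {x y : Fin m} (h : Beats t x y) : (circ n m t).margin x y = n := by
  have : ¬ Beats t y x := by unfold Beats at *; omega
  simp [margin, circ, h, this]

lemma circ_indegree {m t : ℕ} (hm : m = 2 * t + 2) (y : Fin m) (hy : (y : ℕ) ≠ 0) :
    t ≤ (Finset.univ.filter fun z : Fin m => (z : ℕ) ≠ 0 ∧ Beats t z y).card := by
  have hlt := y.isLt
  -- The `t` predecessors of `y` on the circle.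
  refine Finset.le_card_of_inj_on_range
    (fun s => if h : s < t then
      (⟨if s + 1 < y then y - (s + 1) else y + 2 * t - s, by split_ifs <;> omega⟩ : Fin m)
      else y) ?_ ?_
  · intro s hs
    rw [dif_pos hs, Finset.mem_filter]
    simp only [Finset.mem_univ, true_and, Beats]
    split_ifs <;> omega
  · intro s hs s' hs' h
    simp only [hs, hs', dif_pos, Fin.mk.injEq] at h
    split_ifs at h <;> omega

/-- The weight gained by `y` against `a` and the weight lost along the two-step paths `a → z → y`,
`z ∈ I`, concern distinct edges, so together they bound the size from below. -/
lemma le_size_of_paths [Fintype V] [DecidableEq V] {T : WTournament V n} (R : Reversal T) {a y : V}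
    (I : Finset V) (hyI : y ∉ I) (haI : a ∉ I) :
    R.r y a + ∑ z ∈ I, (max (R.r z a) 0 + max (R.r y z) 0) ≤ R.size := by
  have h0 : ∀ x z, 0 ≤ max (R.r x z) 0 := fun _ _ => le_max_right _ _
  have hrow : R.r y a + ∑ z ∈ I, max (R.r y z) 0 ≤ ∑ z, max (R.r y z) 0 := by
    refine (add_le_add_left (le_max_left (R.r y a) 0) _).trans ?_
    rw [← Finset.sum_insert (f := fun z => max (R.r y z) 0) haI]
    exact Finset.sum_le_sum_of_subset_of_nonneg (Finset.subset_univ _) fun z _ _ => h0 y z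
  have hrows : ∑ z ∈ I, max (R.r z a) 0 ≤ ∑ x ∈ I, ∑ z, max (R.r x z) 0 :=
    Finset.sum_le_sum fun x _ =>
      Finset.single_le_sum (f := fun z => max (R.r x z) 0) (fun z _ => h0 x z) (Finset.mem_univ a)
  have hall : ∑ z, max (R.r y z) 0 + ∑ x ∈ I, ∑ z, max (R.r x z) 0 ≤ R.size := by
    rw [← Finset.sum_insert (f := fun x => ∑ z, max (R.r x z) 0) hyI]
    exact Finset.sum_le_sum_of_subset_of_nonneg (Finset.subset_univ _)
      fun x _ _ => Finset.sum_nonneg fun z _ => h0 x z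
  rw [Finset.sum_add_distrib]
  linarith

lemma circ_le_size {n m t : ℕ} (ht : 0 < t) (hm : m = 2 * t + 2) (a : Fin m) (ha0 : (a : ℕ) = 0)
    (R : Reversal (circ n m t)) (ha : a ∉ ((circ n m t).apply R).SC) :
    (n : ℤ) + t ≤ R.size := by
  simp only [SC, Set.mem_ofPred_eq, not_forall, not_not] at ha
  obtain ⟨y, hy⟩ := ha
  have hya : y ≠ a := by
    rintro rfl
    have := hy.1
    rw [margin_self] at this
    omega
  have hy0 : (y : ℕ) ≠ 0 := fun h => hya (Fin.ext (h.trans ha0.symm))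
  have hmay : (circ n m t).margin a y = n := circ_margin (by unfold Beats; omega)
  have hmya : (circ n m t).margin y a = -n := by
    rw [← hmay]; unfold margin; ring
  have hpos := hy.1
  have hle := ((circ n m t).apply R).margin_le y a
  have hk := margin_apply (circ n m t) R y a
  set k := ((circ n m t).apply R).margin y a with hkdef
  set I := Finset.univ.filter fun z : Fin m => (z : ℕ) ≠ 0 ∧ Beats t z y with hI
  have hyI : y ∉ I := by simp [hI, Beats]
  have haI : a ∉ I := by simp [hI, ha0]
  have hsz := le_size_of_paths R I hyI haI
  -- With `q = R.r y a` one has `k = 2 q - n`, so `(n - k) / 2 + 1 = n - q + 1`.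
  have hpath : ∀ z ∈ I, (n : ℤ) - R.r y a + 1 ≤ max (R.r z a) 0 + max (R.r y z) 0 := by
    intro z hz
    simp only [hI, Finset.mem_filter, Finset.mem_univ, true_and] at hz
    by_contra hlt
    refine not_edgeMD_of_triangle _ (z := z) ?_ ?_ hy
    · have h1 := margin_apply (circ n m t) R a z
      rw [circ_margin (show Beats t a z by unfold Beats; omega)] at h1
      have h2 := R.antisymm a z
      omega
    · have h1 := margin_apply (circ n m t) R z y
      rw [circ_margin hz.2] at h1
      have h2 := R.antisymm z y
      omega
  have hsum := Finset.card_nsmul_le_sum I _ _ hpath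
  have hcard : (t : ℤ) ≤ I.card := by exact_mod_cast circ_indegree hm y hy0
  rw [nsmul_eq_mul] at hsum
  have hq : 0 ≤ (n : ℤ) - R.r y a := by omega
  have ht' : (1 : ℤ) ≤ t := by exact_mod_cast ht
  have h3 : (t : ℤ) * ((n : ℤ) - R.r y a + 1) ≤ I.card * ((n : ℤ) - R.r y a + 1) :=
    mul_le_mul_of_nonneg_right hcard (by omega)
  nlinarith [mul_nonneg (sub_nonneg.2 ht') hq]

/-! ### Tightness for non-winners -/

/-- Everybody beats `d` with weight `2h`, and all other pairs are tied. -/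
def loser [DecidableEq V] (n h : ℕ) (hn : n = h + h) (d : V) : WTournament V n where
  w x y := if x = y then 0 else if x = d then 0 else if y = d then n else h
  diag x := by simp
  nonneg x y _ := by split_ifs <;> simp
  compl x y hxy := by
    have := hxy.symm
    by_cases hx : x = d
    · subst hx; simp [hxy, this]
    · by_cases hy : y = d
      · subst hy; simp [hxy, this]
      · simp only [hxy, this, hx, hy, if_false]; omega

lemma loser_margin_to [DecidableEq V] {n h : ℕ} (hn : n = h + h) {d y : V} (hy : y ≠ d) :
    (loser n h hn d).margin y d = n := by
  simp [margin, loser, hy]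

lemma loser_margin_le [DecidableEq V] {n h : ℕ} (hn : n = h + h) {d y : V} (hy : y ≠ d) (p : V) :
    (loser n h hn d).margin p y ≤ 0 := by
  simp only [margin, loser, hy, if_false]
  by_cases h1 : p = y
  · simp [h1]
  · by_cases h2 : p = d
    · simp [h2, hy, hy.symm]
    · simp [h1, Ne.symm h1, h2]

lemma loser_not_mem [DecidableEq V] {n h : ℕ} (hn : n = h + h) (h0 : 0 < n) {d y : V}
    (hy : y ≠ d) : d ∉ (loser n h hn d).SC := by
  refine fun hd => hd y (edgeMD_of_forall_lt _ ?_ fun p => ?_)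
  · rw [loser_margin_to hn hy]; omega
  · have := loser_margin_le hn hy p
    rw [loser_margin_to hn hy]; omega

lemma loser_le_size [Fintype V] [DecidableEq V] {n h : ℕ} (hn : n = h + h) (d : V)
    (R : Reversal (loser n h hn d)) (hd : d ∈ ((loser n h hn d).apply R).SC) :
    (h : ℤ) * ((Fintype.card V : ℤ) - 1) ≤ R.size := by
  have h0 : ∀ x z, 0 ≤ max (R.r x z) 0 := fun _ _ => le_max_right _ _
  have hcol : ∀ y ∈ Finset.univ.erase d, (h : ℤ) ≤ ∑ x, max (R.r x y) 0 := by
    intro y hy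
    have hyd := Finset.ne_of_mem_erase hy
    have hm := margin_apply (loser n h hn d) R y d
    rw [loser_margin_to hn hyd] at hm
    have hanti := R.antisymm y d
    have hsd : max (R.r d y) 0 ≤ ∑ x, max (R.r x y) 0 :=
      Finset.single_le_sum (f := fun x => max (R.r x y) 0) (fun x _ => h0 x y) (Finset.mem_univ d)
    by_cases hk : 0 < ((loser n h hn d).apply R).margin y d
    · have hex : ∃ p, ((loser n h hn d).apply R).margin y d
          ≤ ((loser n h hn d).apply R).margin p y := by
        by_contra! hcon
        exact hd y (edgeMD_of_forall_lt _ hk hcon)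
      obtain ⟨p, hp⟩ := hex
      have hpd : p ≠ d := by
        rintro rfl
        unfold margin at hk hp
        omega
      have hmp := margin_apply (loser n h hn d) R p y
      have hmle := loser_margin_le hn hyd p
      have hpair : max (R.r d y) 0 + max (R.r p y) 0 ≤ ∑ x, max (R.r x y) 0 := by
        rw [← Finset.sum_pair (f := fun x => max (R.r x y) 0) hpd.symm]
        exact Finset.sum_le_sum_of_subset_of_nonneg (Finset.subset_univ _) fun x _ _ => h0 x y
      omega
    · omega
  have h1 := Finset.card_nsmul_le_sum _ _ _ hcol
  have hpos : 0 < Fintype.card V := Fintype.card_pos_iff.2 ⟨d⟩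
  rw [Finset.card_erase_of_mem (Finset.mem_univ d), Finset.card_univ, nsmul_eq_mul,
    Nat.cast_sub hpos, Nat.cast_one, mul_comm] at h1
  have hswap : R.size = ∑ y, ∑ x, max (R.r x y) 0 := Finset.sum_comm
  refine h1.trans ?_
  rw [hswap]
  exact Finset.sum_le_sum_of_subset_of_nonneg (Finset.subset_univ _)
    fun y _ _ => Finset.sum_nonneg fun x _ => h0 x y

end WTournament

/-- bounds on `MoV_SC` for winners and non-winners, together with
their tightness. -/
theorem MoV_SC_bounds :
    (∀ (V : Type) [Fintype V] (n : ℕ), 0 < n →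
      ∀ (T : WTournament V n) (a d : V),
        2 < Fintype.card V → a ∈ T.SC → d ∉ T.SC →
        -(⌈(n : ℚ) / 2⌉ * ((Fintype.card V : ℤ) - 1)) ≤
            WTournament.MoV WTournament.SC T d ∧
          WTournament.MoV WTournament.SC T a ≤
            (n : ℤ) + ⌈((Fintype.card V : ℚ) - 2) / 2⌉) ∧
    (∀ n m : ℕ, 0 < n → Even m → 2 < m →
      ∃ (T : WTournament (Fin m) n) (a : Fin m),
        a ∈ T.SC ∧
        WTournament.MoV WTournament.SC T a = (n : ℤ) + ⌈((m : ℚ) - 2) / 2⌉) ∧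
    (∀ n m : ℕ, 0 < n → Even n → 2 < m →
      ∃ (T : WTournament (Fin m) n) (d : Fin m),
        d ∉ T.SC ∧
        WTournament.MoV WTournament.SC T d = -(⌈(n : ℚ) / 2⌉ * ((m : ℤ) - 1))) := by
  refine ⟨?_, ?_, ?_⟩
  · intro V _ n hn T a d hV ha hd
    exact ⟨(T.le_MoV_nonwinner d hd).2, (T.MoV_winner_le hn a hV ha).2⟩
  · rintro n m hn ⟨s, hs⟩ hm
    obtain ⟨t, rfl⟩ : ∃ t, s = t + 1 := ⟨s - 1, by omega⟩
    have hm' : m = 2 * t + 2 := by omega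
    let a : Fin m := ⟨0, by omega⟩
    have ha : a ∈ (WTournament.circ n m t).SC := by
      refine WTournament.mem_SC_of_margin_nonpos _ fun y => ?_
      simp only [WTournament.margin, WTournament.circ]
      have : ¬ WTournament.Beats t y a := by simp [WTournament.Beats, a]
      rw [if_neg this]
      split_ifs <;> simp
    obtain ⟨⟨R, hR⟩, hle⟩ := WTournament.MoV_winner_le hn (WTournament.circ n m t) a
      (by simpa using hm) ha
    rw [Fintype.card_fin] at hle
    refine ⟨_, a, ha, hle.antisymm ?_⟩
    have hceil : ⌈((m : ℚ) - 2) / 2⌉ = (t : ℤ) := by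
      have : ((m : ℚ) - 2) / 2 = ((t : ℤ) : ℚ) := by
        rw [hm']; push_cast; ring
      rw [this, Int.ceil_intCast]
    rw [hceil, WTournament.MoV, if_pos ha]
    refine le_csInf ⟨_, R, hR, rfl⟩ ?_
    rintro k ⟨R', hR', rfl⟩
    exact WTournament.circ_le_size (by omega) hm' a rfl R' (hR'.1 ha)
  · rintro n m hn ⟨h, hh⟩ hm
    let d : Fin m := ⟨0, by omega⟩
    have hd : d ∉ (WTournament.loser n h hh d).SC :=
      WTournament.loser_not_mem hh hn (y := ⟨1, by omega⟩) (by simp [d])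
    obtain ⟨⟨R, hR⟩, hle⟩ := WTournament.le_MoV_nonwinner (WTournament.loser n h hh d) d hd
    rw [Fintype.card_fin] at hle
    refine ⟨_, d, hd, le_antisymm ?_ hle⟩
    have hceil : ⌈(n : ℚ) / 2⌉ = (h : ℤ) := by
      have : (n : ℚ) / 2 = ((h : ℤ) : ℚ) := by
        rw [hh]; push_cast; ring
      rw [this, Int.ceil_intCast]
    rw [hceil, WTournament.MoV, if_neg hd]
    refine neg_le_neg (le_csInf ⟨_, R, hR, rfl⟩ ?_)
    rintro k ⟨R', hR', rfl⟩
    have hd' : d ∈ ((WTournament.loser n h hh d).apply R').SC := by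
      by_contra hcon
      exact hd (hR'.2 hcon)
    simpa using WTournament.loser_le_size hh d R' hd'
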